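/- Let μ be a probability measure on X = (ℝ^d)^N and g = (g_n)_{n=1}^N with each g_n: X → ℝ^d Borel, F_n-measurable and Σ_{n=1}^N E_μ[|g_n|_*^q] < ∞. Let H be the set of predictable processes h = (h_n)_{n=1}^N (each h_n: X → ℝ^d Borel and F_{n−1}-measurable) with Σ_{n=1}^N E_μ[|h_n|_*^q] < ∞, and let v: ℝ^d → ℝ^d be v(e) = (e_1 |e_1|^{q−2}, …, e_d |e_d|^{q−2}). Then the functional J[h] = Σ_{n=1}^N E_μ[|g_n − h_n|_*^q] attains its infimum over H at some h* ∈ H, this minimizer is unique up to modification on μ-null sets, and it satisfies the first-order condition E_μ[v(g_n − h*_n) | F_{n−1}] = 0 μ-a.s. for every n ∈ {1, …, N}. -/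

import Mathlib

open MeasureTheory Filter Set
open scoped ENNReal

noncomputable section

/-- Discrete path space `X = (ℝ^d)^N`. -/
abbrev PathD (N d : ℕ) : Type := Fin N → Fin d → ℝ

/-- The `ℓ_e` norm on `ℝ^d`. -/
def lpnorm {d : ℕ} (e : ℝ) (v : Fin d → ℝ) : ℝ := (∑ i, |v i| ^ e) ^ (1 / e)

/-- Coordinate `x_n` of a path, with the convention `x_0 = 0` (and `x_n = 0` for `n > N`). -/
def coord {N d : ℕ} (x : PathD N d) (n : ℕ) : Fin d → ℝ :=
  if h : 1 ≤ n ∧ n ≤ N then x ⟨n - 1, by omega⟩ else 0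

/-- The cost `c_N(x,y) = Σ_{n=1}^N |Δx_n − Δy_n|^p` (with `|·|` the `ℓ_p` norm). -/
def cN {N d : ℕ} (p : ℝ) (x y : PathD N d) : ℝ :=
  ∑ n ∈ Finset.Icc 1 N,
    lpnorm p ((coord x n - coord x (n - 1)) - (coord y n - coord y (n - 1))) ^ p

/-- The σ-algebra `F_n = σ(x_1, …, x_n)` on the discrete path space. -/
def Fn (N d n : ℕ) : MeasurableSpace (PathD N d) :=
  MeasurableSpace.comap (fun x (i : Fin N) => if (i : ℕ) + 1 ≤ n then x i else 0) inferInstance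

/-- Conditional independence of `m₁` and `m₂` given `m'` under `π`, expressed through
conditional expectations of indicators. -/
def CondIndepOn {Ω : Type*} [MeasurableSpace Ω] (π : Measure Ω)
    (m' m₁ m₂ : MeasurableSpace Ω) : Prop :=
  ∀ A B : Set Ω, MeasurableSet[m₁] A → MeasurableSet[m₂] B →
    (π[(A ∩ B).indicator (fun _ => (1 : ℝ)) | m']) =ᵐ[π]
      (π[A.indicator (fun _ => (1 : ℝ)) | m']) * (π[B.indicator (fun _ => (1 : ℝ)) | m'])

/-- `π` is a coupling with first marginal `μ` which is causal to its second marginal: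
for every `n`, `σ(Y_1,…,Y_n)` is conditionally independent of `σ(X_1,…,X_N)` given `F_n`. -/
def IsCausalStar {N d : ℕ} (μ : Measure (PathD N d))
    (π : Measure (PathD N d × PathD N d)) : Prop :=
  π.map Prod.fst = μ ∧
  ∀ n : ℕ, CondIndepOn π ((Fn N d n).comap Prod.fst)
    ((Fn N d n).comap Prod.snd) ((Fn N d N).comap Prod.fst)

/-- `π` is a causal coupling of `(μ, ν)`. -/
def IsCausalCoupling {N d : ℕ} (μ ν : Measure (PathD N d))
    (π : Measure (PathD N d × PathD N d)) : Prop :=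
  π.map Prod.snd = ν ∧ IsCausalStar μ π

/-- `π` is a bicausal coupling of `(μ, ν)`: both `π` and its swap are causal. -/
def IsBicausalCoupling {N d : ℕ} (μ ν : Measure (PathD N d))
    (π : Measure (PathD N d × PathD N d)) : Prop :=
  IsCausalCoupling μ ν π ∧
  (∀ n : ℕ, CondIndepOn π ((Fn N d n).comap Prod.snd)
    ((Fn N d n).comap Prod.fst) ((Fn N d N).comap Prod.snd))

/-- `μ` is a martingale measure on the discrete path space: every coordinate is integrable
and `E_μ[X_n | F_{n−1}] = X_{n−1}` a.s. (with `X_0 = 0`). -/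
def IsMartingaleMeasure {N d : ℕ} (μ : Measure (PathD N d)) : Prop :=
  ∀ n : ℕ, 1 ≤ n → n ≤ N →
    Integrable (fun x => coord x n) μ ∧
    (μ[(fun x => coord x n) | Fn N d (n - 1)]) =ᵐ[μ] (fun x => coord x (n - 1))


/-- The discrete pathwise Malliavin derivative `𝔻_n f = Σ_{k=n}^N ∂_k f`, where `∂_k f` is the
`ℝ^d`-valued partial gradient of `f` in the `k`-th coordinate block (`k = 1, …, N`). -/
def Dn {N d : ℕ} (f : PathD N d → ℝ) (n : ℕ) (x : PathD N d) : Fin d → ℝ :=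
  fun j => ∑ k : Fin N, if n ≤ (k : ℕ) + 1 then
    fderiv ℝ f x (Pi.single k (Pi.single j 1)) else 0

/-- Standing assumptions on the penalty function `L : [0,∞) → [0,∞]`:
continuous, non-decreasing, `L(0) = 0` and `liminf_{u→∞} L(u)/u^p = +∞`. -/
structure PenaltyAssumptions (p : ℝ) (L : ℝ → ℝ≥0∞) : Prop where
  cont : ContinuousOn L (Set.Ici 0)
  mono : MonotoneOn L (Set.Ici 0)
  zero : L 0 = 0
  growth : Tendsto (fun u : ℝ => L u / ENNReal.ofReal (u ^ p)) atTop (nhds ⊤)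

/-- The convex conjugate `L*(v) = sup_{u ≥ 0} { u v − L(u) }`, valued in the extended reals. -/
def Lconj (L : ℝ → ℝ≥0∞) (v : ℝ) : EReal :=
  ⨆ u : {u : ℝ // 0 ≤ u}, ((u.1 * v : ℝ) : EReal) - ((L u.1 : ℝ≥0∞) : EReal)

/-- The expected transport cost `E_π[c_N(X,Y)]` of a coupling. -/
def costD {N d : ℕ} (p : ℝ) (π : Measure (PathD N d × PathD N d)) : ℝ :=
  ∫ z, cN p z.1 z.2 ∂π

/-- The penalised causal DRO value
`V(δ) = sup_{π ∈ Π_c(μ,*), E_π[c_N] < ∞} { E_π[f(Y)] − δ L(E_π[c_N(X,Y)]^{1/p}/δ) }`,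
valued in the extended reals. -/
def VD {N d : ℕ} (p : ℝ) (L : ℝ → ℝ≥0∞) (μ : Measure (PathD N d))
    (f : PathD N d → ℝ) (δ : ℝ) : EReal :=
  ⨆ π : {π : Measure (PathD N d × PathD N d) //
      IsProbabilityMeasure π ∧ IsCausalStar μ π ∧
      Integrable (fun z => cN p z.1 z.2) π},
    ((∫ z, f z.2 ∂π.1 : ℝ) : EReal) -
      ((ENNReal.ofReal δ * L ((costD p π.1) ^ (1 / p) / δ) : ℝ≥0∞) : EReal)

/-- The `L^q(μ)`-norm `(Σ_{n=1}^N E_μ[|E_μ[𝔻_n f(X)|F_n]|_*^q])^{1/q}` of the optional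
projection of the discrete pathwise Malliavin derivative. -/
def optionalNorm {N d : ℕ} (q : ℝ) (μ : Measure (PathD N d)) (f : PathD N d → ℝ) : ℝ :=
  (∑ n ∈ Finset.Icc 1 N, ∫ x, lpnorm q ((μ[Dn f n | Fn N d n]) x) ^ q ∂μ) ^ (1 / q)

/-- The map `v(e) = (e_1|e_1|^{q−2}, …, e_d|e_d|^{q−2})` on `ℝ^d`. -/
def vmap {d : ℕ} (q : ℝ) (e : Fin d → ℝ) : Fin d → ℝ :=
  fun i => e i * |e i| ^ (q - 2)

/-- The inverse `Δ^{-1}` of the increment map: `(Δ^{-1} y)_n = Σ_{k=1}^n y_k`. -/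
def DeltaInv {N d : ℕ} (y : PathD N d) : PathD N d :=
  fun i => ∑ k : Fin N, if (k : ℕ) ≤ (i : ℕ) then y k else 0

/-- A process `h = (h_n)_{n=1}^N` is predictable if `h_n` is `F_{n−1}`-measurable. -/
def IsPredictable {N d : ℕ} (h : ℕ → PathD N d → Fin d → ℝ) : Prop :=
  ∀ n : ℕ, 1 ≤ n → n ≤ N → Measurable[Fn N d (n - 1)] (h n)

end

open MeasureTheory

/-! The power `|t| ^ q` is strictly convex with derivative `q * signedPow q t`. For a probability
law with finite `q`-th moment, `a ↦ ∫ signedPow q (y - a)` is continuous, strictly decreasing and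
changes sign, so it has exactly one zero; evaluated along the conditional laws of `g_n i` given the
past, this zero is measurable by monotonicity, and it is the `i`-th component of `h*_n`. Convexity
at the midpoint of `y` and `a - y` combined with the gradient inequality at `y - a` gives
`|a/2|^q + (q/2) signedPow q (y - a) a ≤ |y|^q`, which yields both the change of sign and, once `a`
is the zero, the `q`-th moment bound for `h*`. Since the first-order condition kills the linear term
of the gradient inequality at `g - h*`, every predictable competitor costs at least as much, and by
strict convexity strictly more unless it is a.e. equal. -/

/-- The odd power function `t ↦ t |t|^{q-2}`. It is the scalar version of `vmap` and, up to the
factor `q`, the derivative of `|t|^q`. -/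
noncomputable def signedPow (q t : ℝ) : ℝ := t * |t| ^ (q - 2)

section SignedPow

variable {q : ℝ}

lemma signedPow_neg (q t : ℝ) : signedPow q (-t) = -signedPow q t := by
  simp [signedPow]

lemma abs_signedPow (q t : ℝ) : |signedPow q t| = signedPow q |t| := by
  simp [signedPow, abs_mul, abs_of_nonneg (Real.rpow_nonneg (abs_nonneg t) _)]

lemma signedPow_of_nonneg (hq : 1 < q) {t : ℝ} (ht : 0 ≤ t) : signedPow q t = t ^ (q - 1) := by
  rw [signedPow, abs_of_nonneg ht, ← Real.rpow_one_add' ht (by linarith)]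
  ring_nf

lemma strictMono_signedPow (hq : 1 < q) : StrictMono (signedPow q) := by
  refine strictMono_of_odd_strictMonoOn_nonneg (signedPow_neg q) fun x hx y hy hxy => ?_
  rw [signedPow_of_nonneg hq hx, signedPow_of_nonneg hq hy]
  exact Real.rpow_lt_rpow hx hxy (by linarith)

lemma hasDerivAt_abs_rpow_signedPow (hq : 1 < q) (t : ℝ) :
    HasDerivAt (fun x : ℝ => |x| ^ q) (q * signedPow q t) t := by
  convert hasDerivAt_abs_rpow t hq using 1
  rw [signedPow]
  ring

lemma deriv_abs_rpow (hq : 1 < q) : deriv (fun x : ℝ => |x| ^ q) = fun t => q * signedPow q t :=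
  funext fun t => (hasDerivAt_abs_rpow_signedPow hq t).deriv

lemma continuous_signedPow (hq : 1 < q) : Continuous (signedPow q) := by
  have hcont : Continuous fun t => q * signedPow q t :=
    deriv_abs_rpow hq ▸ (contDiff_norm_rpow (E := ℝ) hq).continuous_deriv le_rfl
  refine (hcont.const_mul q⁻¹).congr fun t => ?_
  field_simp

lemma continuous_abs_rpow (hq : 0 ≤ q) : Continuous fun t : ℝ => |t| ^ q :=
  continuous_abs.rpow_const fun _ => Or.inr hq

lemma strictConvexOn_abs_rpow (hq : 1 < q) : StrictConvexOn ℝ univ fun x : ℝ => |x| ^ q := by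
  refine StrictMono.strictConvexOn_univ_of_deriv (continuous_abs_rpow (by linarith)) ?_
  rw [deriv_abs_rpow hq]
  exact (strictMono_signedPow hq).const_mul (by linarith)

lemma abs_rpow_add_signedPow_mul_lt (hq : 1 < q) {a b : ℝ} (hab : a ≠ b) :
    |a| ^ q + q * (signedPow q a * (b - a)) < |b| ^ q := by
  have hconv := strictConvexOn_abs_rpow hq
  have hderiv := hasDerivAt_abs_rpow_signedPow hq a
  rcases hab.lt_or_gt with h | h
  · have hslope := hconv.lt_slope_of_hasDerivAt (mem_univ a) (mem_univ b) h hderiv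
    rw [slope_def_field, lt_div_iff₀ (by linarith)] at hslope
    linarith
  · have hslope := hconv.slope_lt_of_hasDerivAt (mem_univ b) (mem_univ a) h hderiv
    rw [slope_def_field, div_lt_iff₀ (by linarith)] at hslope
    linarith

lemma abs_rpow_add_signedPow_mul_le (hq : 1 < q) (a b : ℝ) :
    |a| ^ q + q * (signedPow q a * (b - a)) ≤ |b| ^ q := by
  rcases eq_or_ne a b with rfl | hab
  · simp
  · exact (abs_rpow_add_signedPow_mul_lt hq hab).le

/-- A substitute for Young's inequality, obtained from the gradient inequality in the directions
`t` and `-t`. -/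
lemma abs_mul_signedPow_mul_le (hq : 1 < q) (s t : ℝ) :
    |q * (signedPow q s * t)| ≤ |s + t| ^ q + |s - t| ^ q := by
  have hadd := abs_rpow_add_signedPow_mul_le hq s (s + t)
  have hsub := abs_rpow_add_signedPow_mul_le hq s (s - t)
  rw [add_sub_cancel_left] at hadd
  rw [sub_sub_cancel_left] at hsub
  have hs : 0 ≤ |s| ^ q := by positivity
  have hst : 0 ≤ |s + t| ^ q := by positivity
  have hst' : 0 ≤ |s - t| ^ q := by positivity
  exact abs_le.2 ⟨by linarith, by linarith⟩

lemma abs_half_rpow_add_signedPow_sub_mul_le (hq : 1 < q) (t a : ℝ) :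
    |a / 2| ^ q + q / 2 * (signedPow q (t - a) * a) ≤ |t| ^ q := by
  have hmid : |a / 2| ^ q ≤ |t| ^ q / 2 + |t - a| ^ q / 2 := by
    have h := (strictConvexOn_abs_rpow hq).convexOn.2 (mem_univ t) (mem_univ (a - t))
      one_half_pos.le one_half_pos.le (add_halves 1)
    simp only [smul_eq_mul, abs_sub_comm a t] at h
    rw [show 1 / 2 * t + 1 / 2 * (a - t) = a / 2 by ring] at h
    linarith
  have hgrad := abs_rpow_add_signedPow_mul_le hq (t - a) t
  rw [sub_sub_cancel] at hgrad
  linarith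

end SignedPow

section Integral

variable {Ω : Type*} {mΩ : MeasurableSpace Ω} {μ : Measure Ω} {q : ℝ} {f g : Ω → ℝ}

lemma memLp_ofReal_iff_integrable_abs_rpow (hq : 0 < q) (hf : AEStronglyMeasurable f μ) :
    MemLp f (.ofReal q) μ ↔ Integrable (fun x => |f x| ^ q) μ := by
  rw [← integrable_norm_rpow_iff hf (by simpa) ENNReal.ofReal_ne_top,
    ENNReal.toReal_ofReal hq.le]
  simp only [Real.norm_eq_abs]

lemma integrable_abs_rpow_of_memLp (hq : 0 < q) (hf : MemLp f (.ofReal q) μ) :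
    Integrable (fun x => |f x| ^ q) μ :=
  (memLp_ofReal_iff_integrable_abs_rpow hq hf.1).1 hf

lemma integrable_signedPow_mul (hq : 1 < q) (hf : MemLp f (.ofReal q) μ)
    (hg : MemLp g (.ofReal q) μ) : Integrable (fun x => signedPow q (f x) * g x) μ := by
  have hq0 : 0 < q := by linarith
  rw [← integrable_const_mul_iff (isUnit_iff_ne_zero.2 hq0.ne')]
  exact ((integrable_abs_rpow_of_memLp hq0 (hf.add hg)).add
    (integrable_abs_rpow_of_memLp hq0 (hf.sub hg))).mono'
    ((((continuous_signedPow hq).comp_aestronglyMeasurable hf.1).mul hg.1).const_mul q)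
    (.of_forall fun x => abs_mul_signedPow_mul_le hq (f x) (g x))

lemma integrable_signedPow [IsFiniteMeasure μ] (hq : 1 < q) (hf : MemLp f (.ofReal q) μ) :
    Integrable (fun x => signedPow q (f x)) μ := by
  simpa using integrable_signedPow_mul hq hf (memLp_const 1)

lemma integral_abs_rpow_add_signedPow_mul_eq (hq : 1 < q) (hf : MemLp f (.ofReal q) μ)
    (hg : MemLp g (.ofReal q) μ) (horth : ∫ x, signedPow q (f x) * (g x - f x) ∂μ = 0) :
    ∫ x, (|f x| ^ q + q * (signedPow q (f x) * (g x - f x))) ∂μ = ∫ x, |f x| ^ q ∂μ := by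
  have hint : Integrable (fun x => signedPow q (f x) * (g x - f x)) μ :=
    integrable_signedPow_mul hq hf (hg.sub hf)
  rw [integral_add (integrable_abs_rpow_of_memLp (by linarith) hf) (hint.const_mul q),
    integral_const_mul, horth, mul_zero, add_zero]

lemma integrable_abs_rpow_add_signedPow_mul (hq : 1 < q) (hf : MemLp f (.ofReal q) μ)
    (hg : MemLp g (.ofReal q) μ) :
    Integrable (fun x => |f x| ^ q + q * (signedPow q (f x) * (g x - f x))) μ :=
  (integrable_abs_rpow_of_memLp (by linarith) hf).add
    ((integrable_signedPow_mul hq hf (hg.sub hf)).const_mul q)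

lemma integral_abs_rpow_le_of_integral_signedPow_mul_eq_zero (hq : 1 < q)
    (hf : MemLp f (.ofReal q) μ) (hg : MemLp g (.ofReal q) μ)
    (horth : ∫ x, signedPow q (f x) * (g x - f x) ∂μ = 0) :
    ∫ x, |f x| ^ q ∂μ ≤ ∫ x, |g x| ^ q ∂μ :=
  integral_abs_rpow_add_signedPow_mul_eq hq hf hg horth ▸
    integral_mono (integrable_abs_rpow_add_signedPow_mul hq hf hg)
      (integrable_abs_rpow_of_memLp (by linarith) hg)
      fun x => abs_rpow_add_signedPow_mul_le hq (f x) (g x)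

lemma ae_eq_of_integral_abs_rpow_eq_of_integral_signedPow_mul_eq_zero (hq : 1 < q)
    (hf : MemLp f (.ofReal q) μ) (hg : MemLp g (.ofReal q) μ)
    (horth : ∫ x, signedPow q (f x) * (g x - f x) ∂μ = 0)
    (heq : ∫ x, |f x| ^ q ∂μ = ∫ x, |g x| ^ q ∂μ) : f =ᵐ[μ] g := by
  have hae := (integral_eq_iff_of_ae_le (integrable_abs_rpow_add_signedPow_mul hq hf hg)
    (integrable_abs_rpow_of_memLp (by linarith) hg)
    (.of_forall fun x => abs_rpow_add_signedPow_mul_le hq (f x) (g x))).1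
    ((integral_abs_rpow_add_signedPow_mul_eq hq hf hg horth).trans heq)
  filter_upwards [hae] with x hx
  by_contra hne
  exact (abs_rpow_add_signedPow_mul_lt hq hne).ne hx

end Integral

section Mean

variable {Ω : Type*} {mΩ : MeasurableSpace Ω} {μ : Measure Ω} {q : ℝ} {f : Ω → ℝ}

lemma integrable_signedPow_sub_const [IsFiniteMeasure μ] (hq : 1 < q)
    (hf : MemLp f (.ofReal q) μ) (a : ℝ) : Integrable (fun x => signedPow q (f x - a)) μ :=
  integrable_signedPow hq (hf.sub (memLp_const a))

lemma abs_half_rpow_add_integral_signedPow_sub_mul_le [IsProbabilityMeasure μ] (hq : 1 < q)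
    (hf : MemLp f (.ofReal q) μ) (a : ℝ) :
    |a / 2| ^ q + q / 2 * ((∫ x, signedPow q (f x - a) ∂μ) * a) ≤ ∫ x, |f x| ^ q ∂μ := by
  have hint := ((integrable_signedPow_sub_const hq hf a).mul_const a).const_mul (q / 2)
  calc |a / 2| ^ q + q / 2 * ((∫ x, signedPow q (f x - a) ∂μ) * a)
      = ∫ x, (|a / 2| ^ q + q / 2 * (signedPow q (f x - a) * a)) ∂μ := by
        rw [integral_add (integrable_const _) hint, integral_const_mul, integral_mul_const]
        simp only [integral_const, probReal_univ, one_smul]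
    _ ≤ ∫ x, |f x| ^ q ∂μ :=
        integral_mono ((integrable_const _).add hint)
          (integrable_abs_rpow_of_memLp (by linarith) hf)
          fun x => abs_half_rpow_add_signedPow_sub_mul_le hq (f x) a

lemma continuous_integral_signedPow_sub [IsFiniteMeasure μ] (hq : 1 < q)
    (hf : MemLp f (.ofReal q) μ) : Continuous fun a => ∫ x, signedPow q (f x - a) ∂μ := by
  refine continuous_iff_continuousAt.2 fun a₀ => ?_
  have hbound : Integrable (fun x => signedPow q (|f x| + (|a₀| + 1))) μ :=
    integrable_signedPow hq (hf.abs.add (memLp_const _))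
  refine continuousAt_of_dominated
    (.of_forall fun a => (integrable_signedPow_sub_const hq hf a).aestronglyMeasurable)
    ?_ hbound (.of_forall fun x =>
      ((continuous_signedPow hq).comp (continuous_const.sub continuous_id)).continuousAt)
  filter_upwards [continuous_abs.continuousAt.eventually_lt_const (lt_add_one |a₀|)] with a ha
  refine .of_forall fun x => ?_
  rw [Real.norm_eq_abs, abs_signedPow]
  exact (strictMono_signedPow hq).monotone (by linarith [abs_sub (f x) a])

lemma strictAnti_integral_signedPow_sub [IsFiniteMeasure μ] [NeZero μ] (hq : 1 < q)
    (hf : MemLp f (.ofReal q) μ) : StrictAnti fun a => ∫ x, signedPow q (f x - a) ∂μ := by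
  intro a b hab
  have hint := integrable_signedPow_sub_const hq hf
  have hlt (x : Ω) : signedPow q (f x - b) < signedPow q (f x - a) :=
    strictMono_signedPow hq (by linarith)
  refine (integral_mono (hint b) (hint a) fun x => (hlt x).le).lt_of_ne fun heq => ?_
  obtain ⟨x, hx⟩ := ((integral_eq_iff_of_ae_le (hint b) (hint a)
    (.of_forall fun x => (hlt x).le)).1 heq).exists
  exact (hlt x).ne hx

lemma exists_integral_signedPow_sub_eq_zero [IsProbabilityMeasure μ] (hq : 1 < q)
    (hf : MemLp f (.ofReal q) μ) : ∃ a, ∫ x, signedPow q (f x - a) ∂μ = 0 := by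
  set F := ∫ x, |f x| ^ q ∂μ
  have hF : 0 ≤ F := integral_nonneg fun x => by positivity
  set R := 2 * (F + 1)
  have hneg {a : ℝ} (ha : |a| = R) : (∫ x, signedPow q (f x - a) ∂μ) * a < 0 := by
    have hle := abs_half_rpow_add_integral_signedPow_sub_mul_le hq hf a
    have hself : F + 1 ≤ (F + 1) ^ q := Real.self_le_rpow_of_one_le (by linarith) hq.le
    rw [abs_div, abs_two, ha, mul_div_cancel_left₀ _ two_ne_zero] at hle
    exact neg_of_mul_neg_right (by linarith : q / 2 * _ < 0) (by linarith)
  have hR : 0 < R := by positivity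
  have hright : ∫ x, signedPow q (f x - R) ∂μ < 0 :=
    neg_of_mul_neg_left (hneg (abs_of_pos hR)) hR.le
  have hleft : 0 < ∫ x, signedPow q (f x - -R) ∂μ :=
    pos_of_mul_neg_left (hneg (by rw [abs_neg, abs_of_pos hR])) (by linarith)
  exact mem_range_of_exists_le_of_exists_ge (continuous_integral_signedPow_sub hq hf)
    ⟨R, hright.le⟩ ⟨-R, hleft.le⟩

end Mean

lemma exists_measurable_forall_mem_eq {α β γ : Type*} [LinearOrder α] [TopologicalSpace α]
    [OrderTopology α] [SecondCountableTopology α] [MeasurableSpace α] [BorelSpace α] [Nonempty α]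
    [MeasurableSpace β] [LinearOrder γ] [TopologicalSpace γ] [OrderClosedTopology γ]
    [MeasurableSpace γ] [OpensMeasurableSpace γ] {Φ : β → α → γ} {c : γ} {G : Set β}
    (hG : MeasurableSet G) (hmeas : ∀ a, Measurable fun b => Φ b a)
    (hanti : ∀ b ∈ G, StrictAnti (Φ b)) (hex : ∀ b ∈ G, ∃ a, Φ b a = c) :
    ∃ H : β → α, Measurable H ∧ ∀ b ∈ G, Φ b (H b) = c := by
  classical
  choose! K hK using hex
  obtain ⟨a₀⟩ := ‹Nonempty α›
  refine ⟨G.piecewise K fun _ => a₀, measurable_of_Ioi fun a => ?_, fun b hb => ?_⟩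
  · have hlevel : G ∩ K ⁻¹' Ioi a = G ∩ {b | c < Φ b a} := by
      ext b
      refine and_congr_right fun hb => ?_
      rw [mem_preimage, mem_Ioi, mem_ofPred_eq, ← (hanti b hb).lt_iff_gt, hK b hb]
    rw [piecewise_preimage, Set.ite, inter_comm, hlevel]
    exact (hG.inter (hmeas a measurableSet_Ioi)).union
      ((measurable_const measurableSet_Ioi).diff hG)
  · rw [piecewise_eq_of_mem _ _ _ hb, hK b hb]

section CondMean

open ProbabilityTheory

variable {Ω β : Type*} {m mΩ : MeasurableSpace Ω} {mβ : MeasurableSpace β} {μ : Measure Ω} {q : ℝ}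

lemma exists_measurable_integral_kernel_signedPow_sub_eq_zero (hq : 1 < q) (κ : Kernel β ℝ)
    [IsMarkovKernel κ] :
    ∃ H : β → ℝ, Measurable H ∧
      ∀ b, MemLp id (.ofReal q) (κ b) → ∫ y, signedPow q (y - H b) ∂κ b = 0 := by
  have hG : MeasurableSet {b | MemLp id (.ofReal q) (κ b)} := by
    simp only [memLp_ofReal_iff_integrable_abs_rpow (zero_lt_one.trans hq)
      aestronglyMeasurable_id]
    exact measurableSet_integrable (continuous_abs_rpow (by linarith)).stronglyMeasurable
  exact exists_measurable_forall_mem_eq hG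
    (fun a => (StronglyMeasurable.integral_kernel ((continuous_signedPow hq).comp
      (continuous_id.sub continuous_const)).stronglyMeasurable).measurable)
    (fun b hb => strictAnti_integral_signedPow_sub hq hb)
    fun b hb => exists_integral_signedPow_sub_eq_zero hq hb

lemma ae_memLp_id_condDistrib [IsFiniteMeasure μ] (hq : 0 < q) {X : Ω → β} (hX : AEMeasurable X μ)
    {Y : Ω → ℝ} (hY : MemLp Y (.ofReal q) μ) :
    ∀ᵐ x ∂μ, MemLp id (.ofReal q) (condDistrib Y X μ (X x)) := by
  have hmeas : StronglyMeasurable fun z : β × ℝ => |z.2| ^ q :=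
    (continuous_abs_rpow hq.le).stronglyMeasurable.comp_measurable measurable_snd
  have hint : Integrable (fun z : β × ℝ => |z.2| ^ q) (μ.map fun x => (X x, Y x)) :=
    (integrable_map_measure hmeas.aestronglyMeasurable (hX.prodMk hY.1.aemeasurable)).2
      (integrable_abs_rpow_of_memLp hq hY)
  filter_upwards [hint.condDistrib_ae hX hY.1.aemeasurable] with x hx
  exact (memLp_ofReal_iff_integrable_abs_rpow hq aestronglyMeasurable_id).2 hx

/-- `h` is the conditional `q`-mean of `Y` given `m`: the `m`-measurable function in `L^q` which
satisfies the first-order condition for minimizing `∫ |Y - h|^q`. For `q = 2` it is the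
conditional expectation. -/
structure IsCondPowMean (q : ℝ) (m : MeasurableSpace Ω) {mΩ : MeasurableSpace Ω} (μ : Measure Ω)
    (Y h : Ω → ℝ) : Prop where
  measurable : Measurable[m] h
  memLp : MemLp h (.ofReal q) μ
  condExp_eq_zero : μ[fun x => signedPow q (Y x - h x) | m] =ᵐ[μ] 0

lemma exists_isCondPowMean_comap [IsFiniteMeasure μ] (hq : 1 < q) {X : Ω → β} (hX : Measurable X)
    {Y : Ω → ℝ} (hY : MemLp Y (.ofReal q) μ) : ∃ h, IsCondPowMean q (mβ.comap X) μ Y h := by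
  have hq0 : 0 < q := by linarith
  obtain ⟨H, hH, hmean⟩ :=
    exists_measurable_integral_kernel_signedPow_sub_eq_zero hq (condDistrib Y X μ)
  have hfiber := ae_memLp_id_condDistrib hq0 hX.aemeasurable hY
  have hhalf : MemLp (fun x => H (X x) / 2) (.ofReal q) μ := by
    have hmeas : Measurable fun x => H (X x) / 2 := (hH.comp hX).div_const 2
    refine (memLp_ofReal_iff_integrable_abs_rpow hq0 hmeas.aestronglyMeasurable).2 ?_
    refine (integrable_condExp (m := mβ.comap X) (f := fun x => |Y x| ^ q)).mono'
      ((continuous_abs_rpow hq0.le).measurable.comp hmeas).aestronglyMeasurable ?_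
    filter_upwards [hfiber, condExp_ae_eq_integral_condDistrib hX hY.1.aemeasurable
      (continuous_abs_rpow hq0.le).stronglyMeasurable (integrable_abs_rpow_of_memLp hq0 hY)]
      with x hx hcond
    have hbound := abs_half_rpow_add_integral_signedPow_sub_mul_le hq hx (H (X x))
    simp only [id, hmean _ hx, zero_mul, mul_zero, add_zero] at hbound
    rwa [hcond, Real.norm_of_nonneg (by positivity)]
  have hHX : MemLp (fun x => H (X x)) (.ofReal q) μ := by
    simpa only [mul_div_cancel₀ _ (two_ne_zero' ℝ)] using hhalf.const_mul 2
  refine ⟨fun x => H (X x), hH.comp (comap_measurable X), hHX, ?_⟩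
  have hmeas : StronglyMeasurable fun z : β × ℝ => signedPow q (z.2 - H z.1) :=
    ((continuous_signedPow hq).measurable.comp
      (measurable_snd.sub (hH.comp measurable_fst))).stronglyMeasurable
  filter_upwards [hfiber, condExp_prod_ae_eq_integral_condDistrib hX hY.1.aemeasurable hmeas
    (integrable_signedPow hq (hY.sub hHX))] with x hx hcond
  rw [hcond, hmean _ hx, Pi.zero_apply]

/-- The conditioning variable is the identity map `(Ω, mΩ) → (Ω, m)`: only the conditioned variable
has to take values in a standard Borel space. -/
lemma exists_isCondPowMean [IsFiniteMeasure μ] (hq : 1 < q) (hm : m ≤ mΩ) {Y : Ω → ℝ}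
    (hY : MemLp Y (.ofReal q) μ) : ∃ h, IsCondPowMean q m μ Y h := by
  simpa only [MeasurableSpace.comap_id] using
    exists_isCondPowMean_comap (mβ := m) hq (measurable_id'' hm) hY

namespace IsCondPowMean

variable [IsFiniteMeasure μ] {Y h k : Ω → ℝ}

lemma integral_signedPow_mul_eq_zero (hh : IsCondPowMean q m μ Y h) (hq : 1 < q) (hm : m ≤ mΩ)
    (hY : MemLp Y (.ofReal q) μ) (hkm : Measurable[m] k) (hk : MemLp k (.ofReal q) μ) :
    ∫ x, signedPow q (Y x - h x) * k x ∂μ = 0 := by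
  have hpull : μ[fun x => signedPow q (Y x - h x) * k x | m] =ᵐ[μ]
      μ[fun x => signedPow q (Y x - h x) | m] * k :=
    condExp_mul_of_stronglyMeasurable_right hkm.stronglyMeasurable
      (integrable_signedPow_mul hq (hY.sub hh.memLp) hk)
      (integrable_signedPow hq (hY.sub hh.memLp))
  rw [← integral_condExp hm]
  refine integral_eq_zero_of_ae (hpull.trans ?_)
  filter_upwards [hh.condExp_eq_zero] with x hx
  rw [Pi.mul_apply, hx, Pi.zero_apply, zero_mul]

lemma integral_signedPow_mul_sub_eq_zero (hh : IsCondPowMean q m μ Y h) (hq : 1 < q)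
    (hm : m ≤ mΩ) (hY : MemLp Y (.ofReal q) μ) (hkm : Measurable[m] k)
    (hk : MemLp k (.ofReal q) μ) :
    ∫ x, signedPow q (Y x - h x) * ((Y x - k x) - (Y x - h x)) ∂μ = 0 := by
  simpa only [sub_sub_sub_cancel_left, Pi.sub_apply] using
    hh.integral_signedPow_mul_eq_zero hq hm hY (hh.measurable.sub hkm) (hh.memLp.sub hk)

lemma integral_abs_sub_rpow_le (hh : IsCondPowMean q m μ Y h) (hq : 1 < q) (hm : m ≤ mΩ)
    (hY : MemLp Y (.ofReal q) μ) (hkm : Measurable[m] k) (hk : MemLp k (.ofReal q) μ) :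
    ∫ x, |Y x - h x| ^ q ∂μ ≤ ∫ x, |Y x - k x| ^ q ∂μ :=
  integral_abs_rpow_le_of_integral_signedPow_mul_eq_zero hq (hY.sub hh.memLp) (hY.sub hk)
    (hh.integral_signedPow_mul_sub_eq_zero hq hm hY hkm hk)

lemma ae_eq_of_integral_abs_sub_rpow_eq (hh : IsCondPowMean q m μ Y h) (hq : 1 < q) (hm : m ≤ mΩ)
    (hY : MemLp Y (.ofReal q) μ) (hkm : Measurable[m] k) (hk : MemLp k (.ofReal q) μ)
    (heq : ∫ x, |Y x - h x| ^ q ∂μ = ∫ x, |Y x - k x| ^ q ∂μ) : k =ᵐ[μ] h := by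
  filter_upwards [ae_eq_of_integral_abs_rpow_eq_of_integral_signedPow_mul_eq_zero hq
    (hY.sub hh.memLp) (hY.sub hk) (hh.integral_signedPow_mul_sub_eq_zero hq hm hY hkm hk) heq]
    with x hx
  exact (sub_right_injective hx).symm

end IsCondPowMean

end CondMean

lemma condExp_pi_ae_eq_zero {Ω ι : Type*} [Fintype ι] {m mΩ : MeasurableSpace Ω}
    {μ : Measure Ω} {f : Ω → ι → ℝ} (hf : ∀ i, Integrable (fun x => f x i) μ)
    (h : ∀ i, μ[fun x => f x i | m] =ᵐ[μ] 0) : μ[f | m] =ᵐ[μ] 0 := by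
  have hcomm (i : ι) : (fun x => (μ[f | m]) x i) =ᵐ[μ] μ[fun x => f x i | m] :=
    (ContinuousLinearMap.proj (R := ℝ) (φ := fun _ : ι => ℝ) i).comp_condExp_comm
      (Integrable.of_eval hf)
  filter_upwards [ae_all_iff.2 h, ae_all_iff.2 hcomm] with x hx hx'
  exact funext fun i => (hx' i).trans (hx i)

section Vector

variable {Ω : Type*} {m mΩ : MeasurableSpace Ω} {μ : Measure Ω} {d : ℕ} {q : ℝ}

lemma lpnorm_rpow (hq : q ≠ 0) (v : Fin d → ℝ) : lpnorm q v ^ q = ∑ i, |v i| ^ q := by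
  rw [lpnorm, ← Real.rpow_mul (by positivity), one_div_mul_cancel hq, Real.rpow_one]

lemma integrable_lpnorm_rpow_iff_memLp (hq : 0 < q) {f : Ω → Fin d → ℝ} (hf : AEMeasurable f μ) :
    Integrable (fun x => lpnorm q (f x) ^ q) μ ↔
      ∀ i, MemLp (fun x => f x i) (.ofReal q) μ := by
  have hfi (i : Fin d) : AEStronglyMeasurable (fun x => f x i) μ :=
    (hf.eval i).aestronglyMeasurable
  simp only [lpnorm_rpow hq.ne', memLp_ofReal_iff_integrable_abs_rpow hq (hfi _)]
  refine ⟨fun h i => h.mono' ((continuous_abs_rpow hq.le).comp_aestronglyMeasurable (hfi i))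
    (.of_forall fun x => ?_), fun h => integrable_finsetSum _ fun i _ => h i⟩
  rw [Real.norm_of_nonneg (by positivity)]
  exact Finset.single_le_sum (f := fun i => |f x i| ^ q) (fun j _ => by positivity)
    (Finset.mem_univ i)

lemma integral_lpnorm_sub_rpow (hq : 0 < q) {f k : Ω → Fin d → ℝ}
    (hf : ∀ i, MemLp (fun x => f x i) (.ofReal q) μ)
    (hk : ∀ i, MemLp (fun x => k x i) (.ofReal q) μ) :
    ∫ x, lpnorm q (f x - k x) ^ q ∂μ = ∑ i, ∫ x, |f x i - k x i| ^ q ∂μ := by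
  simp only [lpnorm_rpow hq.ne', Pi.sub_apply]
  exact integral_finsetSum _ fun i _ => integrable_abs_rpow_of_memLp hq ((hf i).sub (hk i))

variable [IsFiniteMeasure μ] {g h k : Ω → Fin d → ℝ}

lemma condExp_vmap_sub_ae_eq_zero (hq : 1 < q) (hg : ∀ i, MemLp (fun x => g x i) (.ofReal q) μ)
    (hh : ∀ i, IsCondPowMean q m μ (fun x => g x i) (fun x => h x i)) :
    μ[fun x => vmap q (g x - h x) | m] =ᵐ[μ] 0 :=
  condExp_pi_ae_eq_zero (fun i => integrable_signedPow hq ((hg i).sub (hh i).memLp))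
    fun i => (hh i).condExp_eq_zero

lemma integral_lpnorm_sub_rpow_le (hq : 1 < q) (hm : m ≤ mΩ)
    (hg : ∀ i, MemLp (fun x => g x i) (.ofReal q) μ)
    (hh : ∀ i, IsCondPowMean q m μ (fun x => g x i) (fun x => h x i)) (hkm : Measurable[m] k)
    (hk : ∀ i, MemLp (fun x => k x i) (.ofReal q) μ) :
    ∫ x, lpnorm q (g x - h x) ^ q ∂μ ≤ ∫ x, lpnorm q (g x - k x) ^ q ∂μ := by
  have hq0 : 0 < q := by linarith
  have hkmeas (i : Fin d) : Measurable[m] fun x => k x i := (measurable_pi_apply i).comp hkm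
  rw [integral_lpnorm_sub_rpow hq0 hg fun i => (hh i).memLp, integral_lpnorm_sub_rpow hq0 hg hk]
  exact Finset.sum_le_sum fun i _ => (hh i).integral_abs_sub_rpow_le hq hm (hg i) (hkmeas i) (hk i)

lemma ae_eq_of_integral_lpnorm_sub_rpow_eq (hq : 1 < q) (hm : m ≤ mΩ)
    (hg : ∀ i, MemLp (fun x => g x i) (.ofReal q) μ)
    (hh : ∀ i, IsCondPowMean q m μ (fun x => g x i) (fun x => h x i)) (hkm : Measurable[m] k)
    (hk : ∀ i, MemLp (fun x => k x i) (.ofReal q) μ)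
    (heq : ∫ x, lpnorm q (g x - h x) ^ q ∂μ = ∫ x, lpnorm q (g x - k x) ^ q ∂μ) :
    k =ᵐ[μ] h := by
  have hq0 : 0 < q := by linarith
  have hkmeas (i : Fin d) : Measurable[m] fun x => k x i := (measurable_pi_apply i).comp hkm
  rw [integral_lpnorm_sub_rpow hq0 hg fun i => (hh i).memLp, integral_lpnorm_sub_rpow hq0 hg hk,
    Finset.sum_eq_sum_iff_of_le fun i _ =>
      (hh i).integral_abs_sub_rpow_le hq hm (hg i) (hkmeas i) (hk i)] at heq
  filter_upwards [ae_all_iff.2 fun i => (hh i).ae_eq_of_integral_abs_sub_rpow_eq hq hm (hg i)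
    (hkmeas i) (hk i) (heq i (Finset.mem_univ i))] with x hx
  exact funext hx

end Vector

theorem statement_13_general {Ω ι : Type*} {mΩ : MeasurableSpace Ω} {d : ℕ} (s : Finset ι) {q : ℝ}
    (hq : 1 < q) (μ : Measure Ω) [IsFiniteMeasure μ] (m : ι → MeasurableSpace Ω)
    (hm : ∀ n ∈ s, m n ≤ mΩ) (g : ι → Ω → Fin d → ℝ) (hgmeas : ∀ n ∈ s, AEMeasurable (g n) μ)
    (hgint : ∀ n ∈ s, Integrable (fun x => lpnorm q (g n x) ^ q) μ) :
    ∃ hstar : ι → Ω → Fin d → ℝ,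
      (∀ n ∈ s, Measurable[m n] (hstar n)) ∧
      (∀ n ∈ s, Integrable (fun x => lpnorm q (hstar n x) ^ q) μ) ∧
      (∀ h : ι → Ω → Fin d → ℝ, (∀ n ∈ s, Measurable[m n] (h n)) →
        (∀ n ∈ s, Integrable (fun x => lpnorm q (h n x) ^ q) μ) →
        ∑ n ∈ s, ∫ x, lpnorm q (g n x - hstar n x) ^ q ∂μ ≤
          ∑ n ∈ s, ∫ x, lpnorm q (g n x - h n x) ^ q ∂μ) ∧
      (∀ h : ι → Ω → Fin d → ℝ, (∀ n ∈ s, Measurable[m n] (h n)) →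
        (∀ n ∈ s, Integrable (fun x => lpnorm q (h n x) ^ q) μ) →
        ∑ n ∈ s, ∫ x, lpnorm q (g n x - h n x) ^ q ∂μ =
          ∑ n ∈ s, ∫ x, lpnorm q (g n x - hstar n x) ^ q ∂μ →
        ∀ n ∈ s, h n =ᵐ[μ] hstar n) ∧
      ∀ n ∈ s, μ[fun x => vmap q (g n x - hstar n x) | m n] =ᵐ[μ] 0 := by
  have hq0 : 0 < q := by linarith
  have hg (n) (hn : n ∈ s) := (integrable_lpnorm_rpow_iff_memLp hq0 (hgmeas n hn)).1 (hgint n hn)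
  have hmemLp {h : ι → Ω → Fin d → ℝ} (hh : ∀ n ∈ s, Measurable[m n] (h n))
      (hi : ∀ n ∈ s, Integrable (fun x => lpnorm q (h n x) ^ q) μ) (n) (hn : n ∈ s) :=
    (integrable_lpnorm_rpow_iff_memLp hq0 ((hh n hn).mono (hm n hn) le_rfl).aemeasurable).1
      (hi n hn)
  choose! k hk using fun n (hn : n ∈ s) i => exists_isCondPowMean hq (hm n hn) (hg n hn i)
  have hmeas (n) (hn : n ∈ s) : Measurable[m n] fun x i => k n i x :=
    @measurable_pi_lambda _ _ _ (m n) _ _ fun i => (hk n hn i).measurable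
  have hle {h : ι → Ω → Fin d → ℝ} (hh : ∀ n ∈ s, Measurable[m n] (h n))
      (hi : ∀ n ∈ s, Integrable (fun x => lpnorm q (h n x) ^ q) μ) (n) (hn : n ∈ s) :=
    integral_lpnorm_sub_rpow_le hq (hm n hn) (hg n hn) (hk n hn) (hh n hn) (hmemLp hh hi n hn)
  refine ⟨fun n x i => k n i x, hmeas, fun n hn => ?_,
    fun h hh hi => Finset.sum_le_sum (hle hh hi),
    fun h hh hi heq n hn => ?_, fun n hn => condExp_vmap_sub_ae_eq_zero hq (hg n hn) (hk n hn)⟩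
  · exact (integrable_lpnorm_rpow_iff_memLp hq0
      ((hmeas n hn).mono (hm n hn) le_rfl).aemeasurable).2 fun i => (hk n hn i).memLp
  · exact ae_eq_of_integral_lpnorm_sub_rpow_eq hq (hm n hn) (hg n hn) (hk n hn) (hh n hn)
      (hmemLp hh hi n hn) ((Finset.sum_eq_sum_iff_of_le (hle hh hi)).1 heq.symm n hn)

lemma Fn_le (N d n : ℕ) : Fn N d n ≤ (inferInstance : MeasurableSpace (PathD N d)) := by
  refine Measurable.comap_le (measurable_pi_lambda _ fun i => ?_)
  split_ifs
  · exact measurable_pi_apply i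
  · exact measurable_const

/-- The `L^q` predictable projection: for adapted `g = (g_n)` with finite
`q`-moments, the functional `J[h] = Σ_n E_μ[|g_n − h_n|_*^q]` attains its infimum over the set
of predictable `h ∈ L^q(μ)` at some `h*`, unique up to modification on `μ`-null sets, and the
minimizer satisfies the first-order condition `E_μ[v(g_n − h*_n) | F_{n−1}] = 0` a.s. -/
theorem statement_13 {N d : ℕ} (p q : ℝ) (hp : 1 < p) (hq : q = p / (p - 1))
    (μ : Measure (PathD N d)) [IsProbabilityMeasure μ]
    (g : ℕ → PathD N d → Fin d → ℝ)
    (hgmeas : ∀ n : ℕ, 1 ≤ n → n ≤ N → Measurable[Fn N d n] (g n))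
    (hgint : ∀ n : ℕ, 1 ≤ n → n ≤ N → Integrable (fun x => lpnorm q (g n x) ^ q) μ) :
    ∃ hstar : ℕ → PathD N d → Fin d → ℝ,
      IsPredictable hstar ∧
      (∀ n : ℕ, 1 ≤ n → n ≤ N → Integrable (fun x => lpnorm q (hstar n x) ^ q) μ) ∧
      (∀ h : ℕ → PathD N d → Fin d → ℝ, IsPredictable h →
        (∀ n : ℕ, 1 ≤ n → n ≤ N → Integrable (fun x => lpnorm q (h n x) ^ q) μ) →
        (∑ n ∈ Finset.Icc 1 N, ∫ x, lpnorm q (g n x - hstar n x) ^ q ∂μ) ≤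
          ∑ n ∈ Finset.Icc 1 N, ∫ x, lpnorm q (g n x - h n x) ^ q ∂μ) ∧
      (∀ h : ℕ → PathD N d → Fin d → ℝ, IsPredictable h →
        (∀ n : ℕ, 1 ≤ n → n ≤ N → Integrable (fun x => lpnorm q (h n x) ^ q) μ) →
        (∑ n ∈ Finset.Icc 1 N, ∫ x, lpnorm q (g n x - h n x) ^ q ∂μ) =
          (∑ n ∈ Finset.Icc 1 N, ∫ x, lpnorm q (g n x - hstar n x) ^ q ∂μ) →
        ∀ n : ℕ, 1 ≤ n → n ≤ N → h n =ᵐ[μ] hstar n) ∧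
      (∀ n : ℕ, 1 ≤ n → n ≤ N →
        (μ[(fun x => vmap q (g n x - hstar n x)) | Fn N d (n - 1)]) =ᵐ[μ] 0) := by
  have hq1 : 1 < q := hq ▸ (one_lt_div (by linarith)).2 (by linarith)
  simpa only [_root_.IsPredictable, Finset.mem_Icc, and_imp] using
    statement_13_general (Finset.Icc 1 N) hq1 μ (fun n => Fn N d (n - 1))
      (fun n _ => Fn_le N d (n - 1)) g
      (fun n hn => ((hgmeas n (Finset.mem_Icc.1 hn).1 (Finset.mem_Icc.1 hn).2).mono
        (Fn_le N d n) le_rfl).aemeasurable)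
      fun n hn => hgint n (Finset.mem_Icc.1 hn).1 (Finset.mem_Icc.1 hn).2
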